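/- For the sum-of-divisors function σ, ∑_{n ≤ x} σ(⌊x/n⌋)/⌊x/n⌋ = x · ∑_{m ≥ 1} σ(m)/(m²(m+1)) + O(x^{1/3} log x) as x → ∞. -/

import Mathlib

open Filter Finset

/-- The additive character `t ↦ exp(2πit)`. -/
noncomputable def expTwoPiI (t : ℝ) : ℂ := Complex.exp (((2 * Real.pi * t : ℝ) : ℂ) * Complex.I)

theorem norm_expTwoPiI (t : ℝ) : ‖expTwoPiI t‖ = 1 := Complex.norm_exp_ofReal_mul_I _

theorem expTwoPiI_add (s t : ℝ) : expTwoPiI (s + t) = expTwoPiI s * expTwoPiI t := by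
  rw [expTwoPiI, expTwoPiI, expTwoPiI, ← Complex.exp_add]
  congr 1
  push_cast
  ring

theorem expTwoPiI_sub_int (t : ℝ) (m : ℤ) : expTwoPiI (t - m) = expTwoPiI t := by
  rw [expTwoPiI, expTwoPiI]
  rw [show (((2 * Real.pi * (t - m) : ℝ) : ℂ) * Complex.I)
    = ((2 * Real.pi * t : ℝ) : ℂ) * Complex.I - m * (2 * Real.pi * Complex.I) by push_cast; ring]
  exact Complex.exp_periodic.sub_int_mul_eq m

theorem re_expTwoPiI (t : ℝ) : (expTwoPiI t).re = Real.cos (2 * Real.pi * t) :=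
  Complex.exp_ofReal_mul_I_re _

theorem one_sub_expTwoPiI_mul (t : ℝ) (ht : Real.sin (Real.pi * t) ≠ 0) :
    (1 - expTwoPiI t) *
      (1 / 2 + ((Real.cos (Real.pi * t) / Real.sin (Real.pi * t) : ℝ) : ℂ) / 2 * Complex.I)
        = 1 := by
  have h1 : expTwoPiI t
      = (1 - 2 * Real.sin (Real.pi * t) ^ 2 : ℝ)
        + (2 * Real.sin (Real.pi * t) * Real.cos (Real.pi * t) : ℝ) * Complex.I := by
    rw [expTwoPiI, Complex.exp_mul_I, ← Complex.ofReal_cos, ← Complex.ofReal_sin,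
      show 2 * Real.pi * t = 2 * (Real.pi * t) by ring, Real.sin_two_mul, Real.cos_two_mul,
      Real.cos_sq']
    push_cast
    ring
  rw [h1]
  have hs := Real.sin_sq_add_cos_sq (Real.pi * t)
  generalize Real.sin (Real.pi * t) = a at ht hs ⊢
  generalize Real.cos (Real.pi * t) = b at hs ⊢
  have ha : (a : ℂ) ≠ 0 := by exact_mod_cast ht
  have hs' : (a : ℂ) ^ 2 + (b : ℂ) ^ 2 = 1 := by exact_mod_cast hs
  push_cast
  field_simp
  linear_combination 2 * (a : ℂ) * hs' - 2 * (a : ℂ) * (b : ℂ) ^ 2 * Complex.I_sq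

/-- Partial summation for a sequence of unit vectors that is a multiple of its own difference. -/
theorem norm_sum_le_of_eq_sub_mul {z : ℕ → ℂ} {c : ℕ → ℝ} {M : ℝ} {L : ℕ}
    (hz : ∀ n, ‖z n‖ = 1) (hM : ∀ n < L, |c n| ≤ M) (hM0 : 0 ≤ M)
    (hc : ∀ n, n + 1 < L → c (n + 1) ≤ c n)
    (h : ∀ n < L, z n = (z n - z (n + 1)) * (1 / 2 + (c n : ℂ) / 2 * Complex.I)) :
    ‖∑ n ∈ range L, z n‖ ≤ 1 + 2 * M := by
  rcases L with _ | L
  · simp; linarith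
  have key : ∀ l ≤ L, ‖∑ n ∈ range (l + 1), z n
      + z (l + 1) * (1 / 2 + (c l : ℂ) / 2 * Complex.I)
      - z 0 * (1 / 2 + (c 0 : ℂ) / 2 * Complex.I)‖ ≤ (c 0 - c l) / 2 := by
    intro l
    induction l with
    | zero =>
      intro _
      have := h 0 (by omega)
      rw [show ∑ n ∈ range (0 + 1), z n
        + z (0 + 1) * (1 / 2 + (c 0 : ℂ) / 2 * Complex.I)
        - z 0 * (1 / 2 + (c 0 : ℂ) / 2 * Complex.I) = 0 by
          simp only [zero_add, sum_range_one] at this ⊢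
          linear_combination this]
      simp
    | succ l ih =>
      intro hl
      have h1 := h (l + 1) (by omega)
      have h2 := hc l (by omega)
      rw [sum_range_succ]
      rw [show ∑ n ∈ range (l + 1), z n + z (l + 1)
        + z (l + 1 + 1) * (1 / 2 + (c (l + 1) : ℂ) / 2 * Complex.I)
        - z 0 * (1 / 2 + (c 0 : ℂ) / 2 * Complex.I)
        = (∑ n ∈ range (l + 1), z n
      + z (l + 1) * (1 / 2 + (c l : ℂ) / 2 * Complex.I)
      - z 0 * (1 / 2 + (c 0 : ℂ) / 2 * Complex.I))
        + z (l + 1) * (((c (l + 1) - c l) / 2 : ℝ) * Complex.I) by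
          push_cast
          linear_combination h1]
      refine (norm_add_le _ _).trans ?_
      have h3 : ‖z (l + 1) * (((c (l + 1) - c l) / 2 : ℝ) * Complex.I)‖
          = (c l - c (l + 1)) / 2 := by
        rw [norm_mul, hz, norm_mul, Complex.norm_I, Complex.norm_real, Real.norm_eq_abs,
          abs_of_nonpos (by linarith)]
        ring
      rw [h3]
      linarith [ih (by omega)]
  have hC : ∀ n < L + 1, ∀ w : ℂ, ‖w‖ = 1 →
      ‖w * (1 / 2 + (c n : ℂ) / 2 * Complex.I)‖ ≤ 1 / 2 + M / 2 := by
    intro n hn w hw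
    rw [norm_mul, hw, one_mul]
    refine (norm_add_le _ _).trans ?_
    have := hM n hn
    simp only [norm_div, norm_mul, Complex.norm_real, Complex.norm_I, Real.norm_eq_abs]
    simp
    linarith
  have k1 := key L le_rfl
  have k2 := hC L (by omega) _ (hz (L + 1))
  have k3 := hC 0 (by omega) _ (hz 0)
  have k4 := abs_le.1 (hM 0 (by omega))
  have k5 := abs_le.1 (hM L (by omega))
  calc ‖∑ n ∈ range (L + 1), z n‖ = ‖(∑ n ∈ range (L + 1), z n
      + z (L + 1) * (1 / 2 + (c L : ℂ) / 2 * Complex.I)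
      - z 0 * (1 / 2 + (c 0 : ℂ) / 2 * Complex.I))
      - z (L + 1) * (1 / 2 + (c L : ℂ) / 2 * Complex.I)
      + z 0 * (1 / 2 + (c 0 : ℂ) / 2 * Complex.I)‖ := by congr 1; ring
    _ ≤ (c 0 - c L) / 2 + (1 / 2 + M / 2) + (1 / 2 + M / 2) := by
      refine (norm_add_le _ _).trans (add_le_add ((norm_sub_le _ _).trans (add_le_add k1 k2)) k3)
    _ ≤ 1 + 2 * M := by linarith

theorem two_mul_le_sin_pi_mul {δ t : ℝ} (hδ : 0 ≤ δ) (h1 : δ ≤ t) (h2 : t ≤ 1 - δ) :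
    2 * δ ≤ Real.sin (Real.pi * t) := by
  have hpi := Real.pi_pos
  rcases le_total t (1 / 2) with h | h
  · have := Real.mul_le_sin (x := Real.pi * t) (by nlinarith) (by nlinarith)
    have e : 2 / Real.pi * (Real.pi * t) = 2 * t := by field_simp
    linarith
  · have := Real.mul_le_sin (x := Real.pi * (1 - t)) (by nlinarith) (by nlinarith)
    have e : 2 / Real.pi * (Real.pi * (1 - t)) = 2 * (1 - t) := by field_simp
    rw [show Real.pi * (1 - t) = Real.pi - Real.pi * t by ring, Real.sin_pi_sub] at this
    rw [show Real.pi * (1 - t) = Real.pi - Real.pi * t by ring] at e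
    linarith

/-- The Kusmin–Landau inequality. -/
theorem norm_sum_expTwoPiI_le_range {g : ℕ → ℝ} {δ : ℝ} {m : ℤ} {L : ℕ} (hδ : 0 < δ)
    (hδ' : δ ≤ 1 / 2)
    (hl : ∀ n < L, m + δ ≤ g (n + 1) - g n) (hu : ∀ n < L, g (n + 1) - g n ≤ m + 1 - δ)
    (hmono : ∀ n, n + 1 < L → g (n + 1) - g n ≤ g (n + 2) - g (n + 1)) :
    ‖∑ n ∈ range L, expTwoPiI (g n)‖ ≤ 2 / δ := by
  have hpi := Real.pi_pos
  set t : ℕ → ℝ := fun n => g (n + 1) - g n - m with ht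
  have hsin : ∀ n < L, 2 * δ ≤ Real.sin (Real.pi * t n) := fun n hn =>
    two_mul_le_sin_pi_mul hδ.le (by simp only [ht]; linarith [hl n hn])
      (by simp only [ht]; linarith [hu n hn])
  have := norm_sum_le_of_eq_sub_mul (z := fun n => expTwoPiI (g n))
    (c := fun n => Real.cos (Real.pi * t n) / Real.sin (Real.pi * t n)) (M := 1 / (2 * δ)) (L := L)
    (fun n => norm_expTwoPiI _) ?_ (by positivity) ?_ ?_
  · refine this.trans ?_
    rw [show 1 + 2 * (1 / (2 * δ)) = (δ + 1) / δ by field_simp]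
    gcongr
    linarith
  · intro n hn
    have := hsin n hn
    rw [abs_div, abs_of_pos (by linarith : 0 < Real.sin (Real.pi * t n))]
    gcongr
    exact Real.abs_cos_le_one _
  · intro n hn
    have h1 := hsin n (by omega)
    have h2 := hsin (n + 1) hn
    rw [div_le_div_iff₀ (by linarith) (by linarith)]
    have h3 : 0 ≤ Real.sin (Real.pi * t (n + 1) - Real.pi * t n) := by
      apply Real.sin_nonneg_of_nonneg_of_le_pi
      · rw [← mul_sub]
        have := hmono n hn
        have e : t n ≤ t (n + 1) := by simp only [ht]; linarith
        nlinarith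
      · have a1 := hl n (by omega)
        have a2 := hu (n + 1) hn
        have e : t (n + 1) - t n ≤ 1 := by simp only [ht]; linarith
        nlinarith
    rw [Real.sin_sub] at h3
    linarith
  · intro n hn
    have h1 := one_sub_expTwoPiI_mul (t n) (by linarith [hsin n hn])
    have h2 : expTwoPiI (g (n + 1)) = expTwoPiI (g n) * expTwoPiI (t n) := by
      simp only [ht]
      rw [expTwoPiI_sub_int, ← expTwoPiI_add]
      congr 1
      ring
    simp only [h2]
    linear_combination (-expTwoPiI (g n)) * h1

theorem norm_sum_expTwoPiI_le_Ico {g : ℕ → ℝ} {δ : ℝ} {m : ℤ} {p q : ℕ} (hδ : 0 < δ)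
    (hδ' : δ ≤ 1 / 2)
    (hl : ∀ n ∈ Ico p q, m + δ ≤ g (n + 1) - g n)
    (hu : ∀ n ∈ Ico p q, g (n + 1) - g n ≤ m + 1 - δ)
    (hmono : ∀ n, p ≤ n → n + 1 < q → g (n + 1) - g n ≤ g (n + 2) - g (n + 1)) :
    ‖∑ n ∈ Ico p q, expTwoPiI (g n)‖ ≤ 2 / δ := by
  rw [sum_Ico_eq_sum_range]
  refine norm_sum_expTwoPiI_le_range (g := fun n => g (p + n)) (m := m) hδ hδ' ?_ ?_ ?_
  · intro n hn
    exact hl (p + n) (by simp; omega)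
  · intro n hn
    exact hu (p + n) (by simp; omega)
  · intro n hn
    exact hmono (p + n) (by omega) (by omega)

/-- A finite set of naturals without gaps is an interval. -/
theorem exists_eq_Ico_of_ordConnected (S : Finset ℕ)
    (h : ∀ i ∈ S, ∀ j ∈ S, ∀ k, i ≤ k → k ≤ j → k ∈ S) : ∃ p q, S = Ico p q := by
  rcases S.eq_empty_or_nonempty with rfl | hne
  · exact ⟨0, 0, by simp⟩
  · refine ⟨S.min' hne, S.max' hne + 1, ?_⟩
    ext k
    simp only [mem_Ico, Nat.lt_succ_iff]
    exact ⟨fun hk => ⟨S.min'_le k hk, S.le_max' k hk⟩,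
      fun hk => h _ (S.min'_mem hne) _ (S.max'_mem hne) k hk.1 hk.2⟩

/-- A set on which a well-spaced sequence stays in a short interval has few elements. -/
theorem card_le_of_spaced {S : Finset ℕ} {D : ℕ → ℝ} {lam w r : ℝ} (hlam : 0 < lam) (hr : 0 ≤ r)
    (hD : ∀ i ∈ S, ∀ j ∈ S, i ≤ j → lam * (j - i) ≤ D j - D i)
    (hw : ∀ i ∈ S, w ≤ D i ∧ D i ≤ w + r) : (S.card : ℝ) ≤ r / lam + 1 := by
  rcases S.eq_empty_or_nonempty with rfl | hne
  · simp; positivity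
  · have hsub : S ⊆ Icc (S.min' hne) (S.max' hne) := fun k hk =>
      mem_Icc.2 ⟨S.min'_le k hk, S.le_max' k hk⟩
    have hc := card_le_card hsub
    have hle := S.min'_le _ (S.max'_mem hne)
    have h1 := hD _ (S.min'_mem hne) _ (S.max'_mem hne) hle
    have h2 := hw _ (S.min'_mem hne)
    have h3 := hw _ (S.max'_mem hne)
    rw [Nat.card_Icc] at hc
    have hc' : (S.card : ℝ) ≤ (S.max' hne : ℝ) - S.min' hne + 1 := by
      have : S.card + S.min' hne ≤ S.max' hne + 1 := by omega
      have : (S.card : ℝ) + S.min' hne ≤ S.max' hne + 1 := by exact_mod_cast this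
      linarith
    have : (S.max' hne : ℝ) - S.min' hne ≤ r / lam := by
      rw [le_div_iff₀ hlam]
      linarith
    linarith

/-- A van der Corput estimate, from the Kusmin–Landau inequality. -/
theorem norm_sum_expTwoPiI_le_of_spaced {g : ℕ → ℝ} {lam u v δ : ℝ} {p q : ℕ} (hlam : 0 < lam)
    (hδ : 0 < δ) (hδ' : δ ≤ 1 / 2) (huv : u ≤ v)
    (hr : ∀ n ∈ Ico p q, u ≤ g (n + 1) - g n ∧ g (n + 1) - g n ≤ v)
    (hs : ∀ n, p ≤ n → n + 1 < q → g (n + 1) - g n + lam ≤ g (n + 2) - g (n + 1)) :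
    ‖∑ n ∈ Ico p q, expTwoPiI (g n)‖ ≤ (v - u + 2) * (2 / δ + 2 * (δ / lam + 1)) := by
  set D : ℕ → ℝ := fun n => g (n + 1) - g n with hDdef
  have hsp : ∀ i, p ≤ i → ∀ j, i ≤ j → j < q → lam * (j - i) ≤ D j - D i := by
    intro i hi j hij
    induction j, hij using Nat.le_induction with
    | base => intro _; simp
    | succ j hj ih =>
      intro hjq
      have h1 := ih (by omega)
      have h2 := hs j (by omega) hjq
      simp only [hDdef] at h1 ⊢
      push_cast
      linarith
  have hmono : ∀ i, p ≤ i → ∀ j, i ≤ j → j < q → D i ≤ D j := by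
    intro i hi j hij hj
    have h1 := hsp i hi j hij hj
    have h2 : (i : ℝ) ≤ j := by exact_mod_cast hij
    nlinarith
  have hmaps : ∀ n ∈ Ico p q, ⌊D n⌋ ∈ Icc ⌊u⌋ ⌊v⌋ := fun n hn =>
    mem_Icc.2 ⟨Int.floor_le_floor (hr n hn).1, Int.floor_le_floor (hr n hn).2⟩
  rw [← sum_fiberwise_of_maps_to hmaps]
  have hbound : ∀ m ∈ Icc ⌊u⌋ ⌊v⌋,
      ‖∑ n ∈ Ico p q with ⌊D n⌋ = m, expTwoPiI (g n)‖ ≤ 2 / δ + 2 * (δ / lam + 1) := by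
    intro m _
    set S := (Ico p q).filter (fun n => ⌊D n⌋ = m) with hS
    have hSm : ∀ n ∈ S, (p ≤ n ∧ n < q) ∧ (m : ℝ) ≤ D n ∧ D n < m + 1 := by
      intro n hn
      rw [hS, mem_filter, mem_Ico, Int.floor_eq_iff] at hn
      exact hn
    have htriv : ∀ T ⊆ S, ‖∑ n ∈ T, expTwoPiI (g n)‖ ≤ (T.card : ℝ) := by
      intro T _
      refine (norm_sum_le _ _).trans ?_
      simp [norm_expTwoPiI]
    rw [← sum_filter_add_sum_filter_not S (fun n => D n < m + δ),
      ← sum_filter_add_sum_filter_not (S.filter (fun n => ¬ D n < m + δ))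
        (fun n => m + 1 - δ < D n)]
    have hA : ‖∑ n ∈ S with D n < m + δ, expTwoPiI (g n)‖ ≤ δ / lam + 1 := by
      refine (htriv _ (filter_subset _ _)).trans ?_
      refine card_le_of_spaced (D := D) (w := m) hlam hδ.le ?_ ?_
      · intro i hi j hj hij
        exact hsp i (hSm i (mem_filter.1 hi).1).1.1 j hij (hSm j (mem_filter.1 hj).1).1.2
      · intro i hi
        exact ⟨(hSm i (mem_filter.1 hi).1).2.1, (mem_filter.1 hi).2.le⟩
    have hB : ‖∑ n ∈ S.filter (fun n => ¬ D n < m + δ) with m + 1 - δ < D n,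
        expTwoPiI (g n)‖ ≤ δ / lam + 1 := by
      refine (htriv _ ((filter_subset _ _).trans (filter_subset _ _))).trans ?_
      refine card_le_of_spaced (D := D) (w := m + 1 - δ) hlam hδ.le ?_ ?_
      · intro i hi j hj hij
        rw [mem_filter, mem_filter] at hi hj
        exact hsp i (hSm i hi.1.1).1.1 j hij (hSm j hj.1.1).1.2
      · intro i hi
        rw [mem_filter, mem_filter] at hi
        exact ⟨hi.2.le, by linarith [(hSm i hi.1.1).2.2]⟩
    have hC : ‖∑ n ∈ S.filter (fun n => ¬ D n < m + δ) with ¬ m + 1 - δ < D n,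
        expTwoPiI (g n)‖ ≤ 2 / δ := by
      set T := (S.filter (fun n => ¬ D n < m + δ)).filter (fun n => ¬ m + 1 - δ < D n) with hT
      have hTm : ∀ n, n ∈ T ↔ ((p ≤ n ∧ n < q) ∧ m + δ ≤ D n ∧ D n ≤ m + 1 - δ) := by
        intro n
        rw [hT, mem_filter, mem_filter, not_lt, not_lt]
        constructor
        · rintro ⟨⟨a, b⟩, c⟩
          exact ⟨(hSm n a).1, b, c⟩
        · rintro ⟨a, b, c⟩
          refine ⟨⟨?_, b⟩, c⟩
          rw [hS, mem_filter, mem_Ico, Int.floor_eq_iff]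
          exact ⟨a, by linarith, by linarith⟩
      obtain ⟨p', q', hTI⟩ := exists_eq_Ico_of_ordConnected T (by
        intro i hi j hj k hik hkj
        rw [hTm] at hi hj ⊢
        exact ⟨⟨by omega, by omega⟩, hi.2.1.trans (hmono i hi.1.1 k hik (by omega)),
          (hmono k (by omega) j hkj hj.1.2).trans hj.2.2⟩)
      rw [hTI] at hTm ⊢
      refine norm_sum_expTwoPiI_le_Ico (m := m) hδ hδ' (fun n hn => ((hTm n).1 hn).2.1)
        (fun n hn => ((hTm n).1 hn).2.2) ?_
      intro n hn hn'
      have h1 := (hTm n).1 (mem_Ico.2 ⟨hn, by omega⟩)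
      have h2 := (hTm (n + 1)).1 (mem_Ico.2 ⟨by omega, hn'⟩)
      exact hmono n h1.1.1 (n + 1) (by omega) h2.1.2
    calc _ ≤ _ := (norm_add_le _ _).trans (add_le_add hA ((norm_add_le _ _).trans
          (add_le_add hB hC)))
      _ = _ := by ring
  have hcard : ((Icc ⌊u⌋ ⌊v⌋).card : ℝ) ≤ v - u + 2 := by
    rw [Int.card_Icc]
    have h1 : ⌊u⌋ ≤ ⌊v⌋ := Int.floor_le_floor huv
    have h2 : ((⌊v⌋ + 1 - ⌊u⌋).toNat : ℤ) = ⌊v⌋ + 1 - ⌊u⌋ := Int.toNat_of_nonneg (by omega)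
    have h3 : ((⌊v⌋ + 1 - ⌊u⌋).toNat : ℝ) = ⌊v⌋ + 1 - ⌊u⌋ := by exact_mod_cast h2
    rw [h3]
    linarith [Int.floor_le v, Int.lt_floor_add_one u]
  calc _ ≤ ∑ m ∈ Icc ⌊u⌋ ⌊v⌋, (2 / δ + 2 * (δ / lam + 1)) :=
        (norm_sum_le _ _).trans (sum_le_sum hbound)
    _ = (Icc ⌊u⌋ ⌊v⌋).card * (2 / δ + 2 * (δ / lam + 1)) := by
      rw [sum_const, nsmul_eq_mul]
    _ ≤ _ := by gcongr

/-- The second periodic Bernoulli function. -/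
noncomputable def periodicBernoulliTwo (t : ℝ) : ℝ := Int.fract t ^ 2 - Int.fract t + 1 / 6

theorem hasSum_periodicBernoulliTwo (t : ℝ) :
    HasSum (fun n : ℕ => 1 / (n : ℝ) ^ 2 * Real.cos (2 * Real.pi * n * t))
      (Real.pi ^ 2 * periodicBernoulliTwo t) := by
  have h := hasSum_one_div_nat_pow_mul_cos (k := 1) one_ne_zero (x := Int.fract t)
    ⟨Int.fract_nonneg t, (Int.fract_lt_one t).le⟩
  have hb : (Polynomial.map (algebraMap ℚ ℝ) (Polynomial.bernoulli (2 * 1))).eval (Int.fract t)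
      = periodicBernoulliTwo t := by
    rw [periodicBernoulliTwo, Polynomial.bernoulli]
    simp [sum_range_succ, Polynomial.eval_add, _root_.bernoulli_two, _root_.bernoulli_one]
    ring
  rw [hb] at h
  convert! h using 1
  · funext n
    rw [mul_one]
    congr 1
    rw [show 2 * Real.pi * n * Int.fract t
      = 2 * Real.pi * n * t - ((n * ⌊t⌋ : ℤ) : ℝ) * (2 * Real.pi) by
      rw [Int.fract]; push_cast; ring]
    rw [Real.cos_sub_int_mul_two_pi]
  · norm_num
    left
    ring

theorem fract_add_eq_or {δ : ℝ} (h0 : 0 ≤ δ) (h1 : δ ≤ 1) (t : ℝ) :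
    Int.fract (t + δ) = Int.fract t + δ ∨
      (1 ≤ Int.fract t + δ ∧ Int.fract (t + δ) = Int.fract t + δ - 1) := by
  rcases lt_or_ge (Int.fract t + δ) 1 with h | h
  · left
    rw [Int.fract_eq_iff]
    refine ⟨by linarith [Int.fract_nonneg t], h, ⌊t⌋, ?_⟩
    rw [Int.fract]; ring
  · right
    refine ⟨h, ?_⟩
    rw [Int.fract_eq_iff]
    refine ⟨by linarith, by linarith [Int.fract_lt_one t], ⌊t⌋ + 1, ?_⟩
    rw [Int.fract]; push_cast; ring

theorem periodicBernoulliTwo_sub_le {δ : ℝ} (h0 : 0 < δ) (h1 : δ ≤ 1) (t : ℝ) :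
    (periodicBernoulliTwo (t + δ) - periodicBernoulliTwo t) / (2 * δ) - δ
      ≤ Int.fract t - 1 / 2 := by
  rw [sub_le_iff_le_add, div_le_iff₀ (by positivity), periodicBernoulliTwo, periodicBernoulliTwo]
  rcases fract_add_eq_or h0.le h1 t with h | ⟨h, h'⟩
  · rw [h]; nlinarith
  · rw [h']; nlinarith

theorem le_periodicBernoulliTwo_sub {δ : ℝ} (h0 : 0 < δ) (h1 : δ ≤ 1) (t : ℝ) :
    Int.fract (t + δ) - 1 / 2
      ≤ (periodicBernoulliTwo (t + δ) - periodicBernoulliTwo t) / (2 * δ) + δ := by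
  rw [← sub_le_iff_le_add, le_div_iff₀ (by positivity), periodicBernoulliTwo, periodicBernoulliTwo]
  have := Int.fract_lt_one t
  rcases fract_add_eq_or h0.le h1 t with h | ⟨h, h'⟩
  · rw [h]; nlinarith
  · rw [h']; nlinarith

theorem sum_Icc_one_div_sqrt_le (H : ℕ) : ∑ h ∈ Icc 1 H, 1 / √(h : ℝ) ≤ 2 * √(H : ℝ) := by
  induction H with
  | zero => simp
  | succ H ih =>
    rw [sum_Icc_succ_top (by omega)]
    have h1 : 0 < √((H + 1 : ℕ) : ℝ) := Real.sqrt_pos.2 (by positivity)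
    have h2 : √((H + 1 : ℕ) : ℝ) ^ 2 = H + 1 := by
      rw [Real.sq_sqrt (by positivity)]; push_cast; ring
    have h3 : √(H : ℝ) ^ 2 = H := Real.sq_sqrt (by positivity)
    have h4 : 0 ≤ √(H : ℝ) := Real.sqrt_nonneg _
    have : 1 / √((H + 1 : ℕ) : ℝ) ≤ 2 * √((H + 1 : ℕ) : ℝ) - 2 * √(H : ℝ) := by
      rw [div_le_iff₀ h1]
      nlinarith [sq_nonneg (√((H + 1 : ℕ) : ℝ) - √(H : ℝ))]
    linarith

theorem sum_Ioc_one_div_mul_sqrt_le {H : ℕ} (hH : 0 < H) (R : ℕ) :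
    ∑ h ∈ Ioc H R, 1 / ((h : ℝ) * √(h : ℝ)) ≤ 2 / √(H : ℝ) := by
  rcases le_or_gt H R with hR | hR
  · suffices h : ∑ h ∈ Ioc H R, 1 / ((h : ℝ) * √(h : ℝ)) ≤ 2 / √(H : ℝ) - 2 / √(R : ℝ) by
      have : 0 ≤ 2 / √(R : ℝ) := by positivity
      linarith
    induction R, hR using Nat.le_induction with
    | base => simp
    | succ R hR ih =>
      rw [sum_Ioc_succ_top (by omega)]
      have hR0 : (0 : ℝ) < R := by exact_mod_cast (by omega : 0 < R)
      have h1 : 0 < √((R + 1 : ℕ) : ℝ) := Real.sqrt_pos.2 (by positivity)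
      have h2 : √((R + 1 : ℕ) : ℝ) ^ 2 = R + 1 := by
        rw [Real.sq_sqrt (by positivity)]; push_cast; ring
      have h3 : √(R : ℝ) ^ 2 = R := Real.sq_sqrt (by positivity)
      have h4 : 0 < √(R : ℝ) := Real.sqrt_pos.2 hR0
      have : 1 / (((R + 1 : ℕ) : ℝ) * √((R + 1 : ℕ) : ℝ))
          ≤ 2 / √(R : ℝ) - 2 / √((R + 1 : ℕ) : ℝ) := by
        have e : ((R + 1 : ℕ) : ℝ) = √((R + 1 : ℕ) : ℝ) ^ 2 := by rw [h2]; push_cast; ring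
        generalize √((R + 1 : ℕ) : ℝ) = a at *
        generalize √(R : ℝ) = b at *
        rw [e, div_sub_div _ _ h4.ne' h1.ne', div_le_div_iff₀ (by positivity) (by positivity)]
        have hab : b ≤ a := by nlinarith
        have key : b ≤ 2 * a ^ 2 * (a - b) := by
          have : (a - b) * (a + b) = 1 := by nlinarith
          nlinarith [mul_nonneg (sub_nonneg.2 hab) h4.le, mul_nonneg (sub_nonneg.2 hab) h1.le,
            mul_pos h1 h4]
        nlinarith
      linarith
  · rw [Ioc_eq_empty (by omega), sum_empty]
    positivity

theorem sum_Icc_one_div_sq_le (R : ℕ) : ∑ h ∈ Icc 1 R, 1 / (h : ℝ) ^ 2 ≤ 3 := by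
  refine (sum_le_hasSum _ (fun _ _ => by positivity) hasSum_zeta_two).trans ?_
  nlinarith [Real.pi_pos, Real.pi_lt_four]

theorem norm_expTwoPiI_sub_one_le (t : ℝ) : ‖expTwoPiI t - 1‖ ≤ 2 * Real.pi * |t| := by
  have := Real.norm_exp_I_mul_ofReal_sub_one_le (x := 2 * Real.pi * t)
  rw [mul_comm Complex.I] at this
  refine this.trans ?_
  rw [Real.norm_eq_abs, abs_mul, abs_of_pos (by positivity)]

theorem norm_expTwoPiI_sub_one_le_two (t : ℝ) : ‖expTwoPiI t - 1‖ ≤ 2 := by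
  refine (norm_sub_le _ _).trans ?_
  rw [norm_expTwoPiI, norm_one]
  norm_num

theorem sum_Icc_weight_le {H : ℕ} (hH : 0 < H) {P Q δ : ℝ} {E : ℕ → ℝ} (hP : 0 ≤ P) (hQ : 0 ≤ Q)
    (hδ : |δ| = 1 / H) (hE : ∀ h : ℕ, 0 < h → E h ≤ P * √(h : ℝ) + Q / h)
    (R : ℕ) :
    ∑ h ∈ Icc 1 R, 1 / (h : ℝ) ^ 2 * (‖expTwoPiI (h * δ) - 1‖ * E h)
      ≤ 20 * (P / √(H : ℝ)) + 20 * (Q / H) := by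
  have hH' : (0 : ℝ) < H := by exact_mod_cast hH
  have hpi := Real.pi_pos
  have hpi3 : Real.pi < 3.2 := by linarith [Real.pi_lt_d2]
  have hterm : ∀ h ∈ Icc 1 R, 1 / (h : ℝ) ^ 2 * (‖expTwoPiI (h * δ) - 1‖ * E h)
      ≤ 2 * Real.pi * P / H * (if h ≤ H then 1 / √(h : ℝ) else 0)
        + 2 * P * (if H < h then 1 / ((h : ℝ) * √(h : ℝ)) else 0)
        + 2 * Real.pi * Q / H * (1 / (h : ℝ) ^ 2) := by
    intro h hh
    have h0 : 0 < h := (mem_Icc.1 hh).1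
    have h0' : (0 : ℝ) < h := by exact_mod_cast h0
    have hs : 0 < √(h : ℝ) := Real.sqrt_pos.2 h0'
    have hsq : √(h : ℝ) ^ 2 = h := Real.sq_sqrt h0'.le
    have e1 : ‖expTwoPiI (h * δ) - 1‖ ≤ 2 * Real.pi * h / H := by
      refine (norm_expTwoPiI_sub_one_le _).trans (le_of_eq ?_)
      rw [abs_mul, hδ, abs_of_pos h0']
      ring
    have e2 := norm_expTwoPiI_sub_one_le_two (h * δ)
    have e3 : 1 / (h : ℝ) ^ 2 * (‖expTwoPiI (h * δ) - 1‖ * E h)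
        ≤ 1 / (h : ℝ) ^ 2 * (‖expTwoPiI (h * δ) - 1‖ * (P * √(h : ℝ)))
          + 1 / (h : ℝ) ^ 2 * (‖expTwoPiI (h * δ) - 1‖ * (Q / h)) := by
      rw [← mul_add, ← mul_add]
      gcongr
      exact hE h h0
    have e4 : 1 / (h : ℝ) ^ 2 * (‖expTwoPiI (h * δ) - 1‖ * (Q / h))
        ≤ 2 * Real.pi * Q / H * (1 / (h : ℝ) ^ 2) := by
      calc _ ≤ 1 / (h : ℝ) ^ 2 * (2 * Real.pi * h / H * (Q / h)) := by gcongr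
        _ = _ := by field_simp
    have e5 : 1 / (h : ℝ) ^ 2 * (‖expTwoPiI (h * δ) - 1‖ * (P * √(h : ℝ)))
        ≤ 2 * Real.pi * P / H * (if h ≤ H then 1 / √(h : ℝ) else 0)
        + 2 * P * (if H < h then 1 / ((h : ℝ) * √(h : ℝ)) else 0) := by
      rcases le_or_gt h H with hle | hgt
      · rw [if_pos hle, if_neg (by omega), mul_zero, add_zero]
        calc _ ≤ 1 / (h : ℝ) ^ 2 * (2 * Real.pi * h / H * (P * √(h : ℝ))) := by gcongr
          _ = 2 * Real.pi * P / H * (√(h : ℝ) / h) := by field_simp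
          _ = _ := by rw [Real.sqrt_div_self']
      · rw [if_neg (by omega), if_pos hgt, mul_zero, zero_add]
        calc _ ≤ 1 / (h : ℝ) ^ 2 * (2 * (P * √(h : ℝ))) := by gcongr
          _ = 2 * P * (1 / h * (√(h : ℝ) / h)) := by field_simp
          _ = _ := by rw [Real.sqrt_div_self']; field_simp
    linarith
  refine (sum_le_sum hterm).trans ?_
  rw [sum_add_distrib, sum_add_distrib, ← mul_sum, ← mul_sum, ← mul_sum, ← sum_filter, ← sum_filter]
  have s1 : ∑ h ∈ Icc 1 R with h ≤ H, 1 / √(h : ℝ) ≤ 2 * √(H : ℝ) := by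
    refine (sum_le_sum_of_subset_of_nonneg ?_ (fun _ _ _ => by positivity)).trans
      (sum_Icc_one_div_sqrt_le H)
    intro h hh
    simp only [mem_filter, mem_Icc] at hh ⊢
    omega
  have s2 : ∑ h ∈ Icc 1 R with H < h, 1 / ((h : ℝ) * √(h : ℝ)) ≤ 2 / √(H : ℝ) := by
    refine (sum_le_sum_of_subset_of_nonneg ?_ (fun _ _ _ => by positivity)).trans
      (sum_Ioc_one_div_mul_sqrt_le hH R)
    intro h hh
    simp only [mem_filter, mem_Icc, mem_Ioc] at hh ⊢
    omega
  have s3 := sum_Icc_one_div_sq_le R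
  calc _ ≤ 2 * Real.pi * P / H * (2 * √(H : ℝ)) + 2 * P * (2 / √(H : ℝ))
        + 2 * Real.pi * Q / H * 3 := by gcongr
    _ = 4 * Real.pi * (P * (√(H : ℝ) / H)) + 4 * (P / √(H : ℝ)) + 6 * Real.pi * (Q / H) := by
      ring
    _ = (4 * Real.pi + 4) * (P / √(H : ℝ)) + 6 * Real.pi * (Q / H) := by
      rw [Real.sqrt_div_self']; ring
    _ ≤ _ := by
      gcongr
      · linarith
      · linarith

theorem abs_sum_periodicBernoulliTwo_sub_le {S : Finset ℕ} {f : ℕ → ℝ} {H : ℕ} (hH : 0 < H)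
    {P Q δ : ℝ} (hP : 0 ≤ P) (hQ : 0 ≤ Q) (hδ : |δ| = 1 / H)
    (hE : ∀ h : ℕ, 0 < h → ‖∑ n ∈ S, expTwoPiI (h * f n)‖ ≤ P * √(h : ℝ) + Q / h) :
    |∑ n ∈ S, (periodicBernoulliTwo (f n + δ) - periodicBernoulliTwo (f n))|
      ≤ 4 * (P / √(H : ℝ)) + 4 * (Q / H) := by
  have hpi := Real.pi_gt_three
  have hsum : HasSum (fun h : ℕ => ∑ n ∈ S,
      (1 / (h : ℝ) ^ 2 * Real.cos (2 * Real.pi * h * (f n + δ))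
      - 1 / (h : ℝ) ^ 2 * Real.cos (2 * Real.pi * h * f n)))
      (∑ n ∈ S, (Real.pi ^ 2 * periodicBernoulliTwo (f n + δ)
        - Real.pi ^ 2 * periodicBernoulliTwo (f n))) :=
    hasSum_sum fun n _ => (hasSum_periodicBernoulliTwo _).sub (hasSum_periodicBernoulliTwo _)
  have hterm : ∀ h : ℕ, |∑ n ∈ S, (1 / (h : ℝ) ^ 2 * Real.cos (2 * Real.pi * h * (f n + δ))
      - 1 / (h : ℝ) ^ 2 * Real.cos (2 * Real.pi * h * f n))|
      ≤ 1 / (h : ℝ) ^ 2 * (‖expTwoPiI (h * δ) - 1‖ * ‖∑ n ∈ S, expTwoPiI (h * f n)‖) := by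
    intro h
    have e : ∑ n ∈ S, (1 / (h : ℝ) ^ 2 * Real.cos (2 * Real.pi * h * (f n + δ))
      - 1 / (h : ℝ) ^ 2 * Real.cos (2 * Real.pi * h * f n))
      = 1 / (h : ℝ) ^ 2 * ((expTwoPiI (h * δ) - 1) * ∑ n ∈ S, expTwoPiI (h * f n)).re := by
      rw [mul_sum, Complex.re_sum, mul_sum]
      refine sum_congr rfl fun n _ => ?_
      rw [sub_mul, one_mul, ← expTwoPiI_add, Complex.sub_re, re_expTwoPiI, re_expTwoPiI, mul_sub]
      congr 3 <;> ring
    rw [e, abs_mul, abs_of_nonneg (by positivity : 0 ≤ 1 / (h : ℝ) ^ 2), ← norm_mul]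
    gcongr
    exact Complex.abs_re_le_norm _
  have hpart : ∀ R : ℕ, |∑ h ∈ range R, ∑ n ∈ S,
      (1 / (h : ℝ) ^ 2 * Real.cos (2 * Real.pi * h * (f n + δ))
      - 1 / (h : ℝ) ^ 2 * Real.cos (2 * Real.pi * h * f n))|
      ≤ 20 * (P / √(H : ℝ)) + 20 * (Q / H) := by
    intro R
    refine (abs_sum_le_sum_abs _ _).trans ((sum_le_sum fun h _ => hterm h).trans ?_)
    refine le_trans ?_ (sum_Icc_weight_le hH hP hQ hδ hE R)
    refine (sum_le_sum_of_subset_of_nonneg (range_subset_range.2 (Nat.le_succ R))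
      fun _ _ _ => by positivity).trans (sum_subset ?_ ?_).symm.le
    · intro h hh
      simp only [mem_Icc, mem_range] at hh ⊢
      omega
    · intro h hh hh'
      have : h = 0 := by
        simp only [mem_Icc, mem_range] at hh hh'
        omega
      simp [this]
  have hlim := le_of_tendsto hsum.tendsto_sum_nat.abs (Eventually.of_forall hpart)
  have e : ∑ n ∈ S, (Real.pi ^ 2 * periodicBernoulliTwo (f n + δ)
        - Real.pi ^ 2 * periodicBernoulliTwo (f n))
      = Real.pi ^ 2 * ∑ n ∈ S, (periodicBernoulliTwo (f n + δ) - periodicBernoulliTwo (f n)) := by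
    rw [mul_sum]
    exact sum_congr rfl fun n _ => by ring
  rw [e, abs_mul, abs_of_pos (by positivity)] at hlim
  have h1 : 0 ≤ P / √(H : ℝ) := by positivity
  have h2 : 0 ≤ Q / H := by positivity
  have h3 := abs_nonneg (∑ n ∈ S, (periodicBernoulliTwo (f n + δ) - periodicBernoulliTwo (f n)))
  have h4 := mul_le_mul_of_nonneg_right (by nlinarith : (9 : ℝ) ≤ Real.pi ^ 2) h3
  linarith

/-- An Erdős–Turán type inequality for the sawtooth function. -/
theorem abs_sum_fract_sub_half_le {S : Finset ℕ} {f : ℕ → ℝ} {H : ℕ} (hH : 0 < H)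
    {P Q : ℝ} (hP : 0 ≤ P) (hQ : 0 ≤ Q)
    (hE : ∀ h : ℕ, 0 < h → ‖∑ n ∈ S, expTwoPiI (h * f n)‖ ≤ P * √(h : ℝ) + Q / h) :
    |∑ n ∈ S, (Int.fract (f n) - 1 / 2)| ≤ 2 * P * √(H : ℝ) + 2 * Q + S.card / H := by
  have hH' : (0 : ℝ) < H := by exact_mod_cast hH
  have hH1 : (1 : ℝ) / H ≤ 1 := by
    rw [div_le_one hH']
    exact_mod_cast hH
  have hd : (0 : ℝ) < 1 / H := by positivity
  have hup := abs_le.1 (abs_sum_periodicBernoulliTwo_sub_le (f := f) (δ := 1 / H) hH hP hQ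
    (abs_of_pos hd) hE)
  have hlo := abs_le.1 (abs_sum_periodicBernoulliTwo_sub_le (f := f) (δ := -(1 / H)) hH hP hQ
    (by rw [abs_neg, abs_of_pos hd]) hE)
  have hs : √(H : ℝ) * √(H : ℝ) = H := Real.mul_self_sqrt hH'.le
  have hs0 : 0 < √(H : ℝ) := Real.sqrt_pos.2 hH'
  have hscale : (4 * (P / √(H : ℝ)) + 4 * (Q / H)) * (H / 2) = 2 * P * √(H : ℝ) + 2 * Q := by
    nth_rewrite 3 [← hs]
    nth_rewrite 2 [← hs]
    field_simp
    ring
  rw [abs_le]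
  constructor
  · have h1 : ∑ n ∈ S, ((periodicBernoulliTwo (f n + 1 / H) - periodicBernoulliTwo (f n)) * (H / 2)
        - 1 / H) ≤ ∑ n ∈ S, (Int.fract (f n) - 1 / 2) := by
      refine sum_le_sum fun n _ => ?_
      refine le_trans (le_of_eq ?_) (periodicBernoulliTwo_sub_le hd hH1 (f n))
      field_simp
    rw [sum_sub_distrib, ← sum_mul, sum_const, nsmul_eq_mul] at h1
    have h2 := mul_le_mul_of_nonneg_right hup.1 (by positivity : 0 ≤ (H : ℝ) / 2)
    rw [neg_mul, hscale] at h2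
    have : (S.card : ℝ) * (1 / H) = S.card / H := by ring
    linarith
  · have h1 : ∑ n ∈ S, (Int.fract (f n) - 1 / 2) ≤ ∑ n ∈ S,
        (-(periodicBernoulliTwo (f n + -(1 / H)) - periodicBernoulliTwo (f n)) * (H / 2)
        + 1 / H) := by
      refine sum_le_sum fun n _ => ?_
      have := le_periodicBernoulliTwo_sub hd hH1 (f n + -(1 / H))
      rw [neg_add_cancel_right] at this
      refine this.trans (le_of_eq ?_)
      field_simp
      ring
    rw [sum_add_distrib, ← sum_mul, sum_const, nsmul_eq_mul, sum_neg_distrib] at h1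
    have h2 := mul_le_mul_of_nonneg_right (neg_le_neg hlo.1) (by positivity : 0 ≤ (H : ℝ) / 2)
    rw [neg_neg, hscale] at h2
    have : (S.card : ℝ) * (1 / H) = S.card / H := by ring
    linarith

theorem norm_sum_expTwoPiI_div_le {Y a : ℝ} {A B : ℕ} (hY : 0 < Y) (ha : 0 ≤ a) (ha1 : a ≤ 1)
    (hA : 0 < A) (hB : B ≤ 2 * A + 1) :
    ‖∑ n ∈ Ioc A B, expTwoPiI (Y / (n + a))‖ ≤ 200 * √(Y / A) + 40 * A ^ 2 / Y := by
  have hA' : (1 : ℝ) ≤ A := by exact_mod_cast hA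
  have hset : Ioc A B = Ico (A + 1) (B + 1) := by ext; simp
  set g : ℕ → ℝ := fun n => Y / (n + a) with hg
  have hdiff : ∀ n : ℕ, A + 1 ≤ n →
      g (n + 1) - g n = -(Y / ((n + a) * (n + 1 + a))) := by
    intro n hn
    have hn' : (1 : ℝ) ≤ n := by exact_mod_cast (by omega : 1 ≤ n)
    have h1 : (n : ℝ) + a ≠ 0 := by positivity
    have h2 : (n : ℝ) + 1 + a ≠ 0 := by positivity
    simp only [hg]
    push_cast
    field_simp
    ring
  have hrange : ∀ n ∈ Ico (A + 1) (B + 1),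
      -(Y / A ^ 2) ≤ g (n + 1) - g n ∧ g (n + 1) - g n ≤ -(Y / (20 * A ^ 2)) := by
    intro n hn
    rw [mem_Ico] at hn
    rw [hdiff n hn.1]
    have hn1 : (A : ℝ) + 1 ≤ n := by exact_mod_cast hn.1
    have hn2 : (n : ℝ) ≤ 2 * A + 1 := by exact_mod_cast (by omega : n ≤ 2 * A + 1)
    have hn0 : (0 : ℝ) < n := by linarith
    constructor
    · rw [neg_le_neg_iff, sq]
      gcongr <;> linarith
    · rw [neg_le_neg_iff, show 20 * (A : ℝ) ^ 2 = (4 * A) * (5 * A) by ring]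
      gcongr <;> linarith
  have hspaced : ∀ n, A + 1 ≤ n → n + 1 < B + 1 →
      g (n + 1) - g n + Y / (60 * A ^ 3) ≤ g (n + 2) - g (n + 1) := by
    intro n hn hnB
    have hn1 : (A : ℝ) + 1 ≤ n := by exact_mod_cast hn
    have hn2 : (n : ℝ) + 1 ≤ 2 * A + 1 := by exact_mod_cast (by omega : n + 1 ≤ 2 * A + 1)
    have hn0 : (0 : ℝ) < n := by linarith
    have h2 := hdiff (n + 1) (by omega)
    rw [show n + 1 + 1 = n + 2 by ring] at h2
    rw [hdiff n hn, h2]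
    have e : Y / ((n + a) * (n + 1 + a)) - Y / (((n + 1 : ℕ) + a) * ((n + 1 : ℕ) + 1 + a))
        = 2 * Y / ((n + a) * (n + 1 + a) * (n + 2 + a)) := by
      have h1 : (n : ℝ) + a ≠ 0 := by positivity
      have h2 : (n : ℝ) + 1 + a ≠ 0 := by positivity
      have h3 : (n : ℝ) + 2 + a ≠ 0 := by positivity
      push_cast
      rw [show (n : ℝ) + 1 + 1 + a = n + 2 + a by ring]
      field_simp
      ring
    have : Y / (60 * A ^ 3) ≤ 2 * Y / ((n + a) * (n + 1 + a) * (n + 2 + a)) := by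
      rw [show Y / (60 * A ^ 3) = 2 * Y / ((4 * A) * (5 * A) * (6 * A)) by ring]
      gcongr <;> linarith
    linarith
  have hpos : 0 < Y / (60 * (A : ℝ) ^ 3) := by positivity
  rcases le_or_gt (Y / (A : ℝ) ^ 2) (1 / 2) with hsmall | hlarge
  · have e20 : Y / (20 * (A : ℝ) ^ 2) = Y / A ^ 2 / 20 := by ring
    have := norm_sum_expTwoPiI_le_Ico (g := g) (m := -1) (p := A + 1) (q := B + 1)
      (δ := Y / (20 * A ^ 2)) (by positivity) (by linarith) (fun n hn => ?_) (fun n hn => ?_)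
      (fun n hn hn' => by linarith [hspaced n hn hn'])
    · rw [hset]
      refine this.trans ?_
      have h1 : 2 / (Y / (20 * (A : ℝ) ^ 2)) = 40 * A ^ 2 / Y := by
        field_simp
        ring
      rw [h1]
      have : 0 ≤ 200 * √(Y / A) := by positivity
      linarith
    · push_cast
      linarith [(hrange n hn).1]
    · push_cast
      linarith [(hrange n hn).2]
  · have hQ : 0 ≤ 40 * (A : ℝ) ^ 2 / Y := by positivity
    rcases le_or_gt (Y / (60 * (A : ℝ) ^ 3)) (1 / 4) with hlam | hlam
    · set r := √(Y / (60 * (A : ℝ) ^ 3)) with hr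
      have hr0 : 0 < r := Real.sqrt_pos.2 hpos
      have hr2 : r ^ 2 = Y / (60 * (A : ℝ) ^ 3) := Real.sq_sqrt hpos.le
      have hr1 : r ≤ 1 / 2 := by nlinarith
      have hv := norm_sum_expTwoPiI_le_of_spaced (g := g) (p := A + 1) (q := B + 1)
        (u := -(Y / A ^ 2)) (v := 0) (δ := r) hpos hr0 hr1
        (by have : 0 ≤ Y / (A : ℝ) ^ 2 := by positivity
            linarith)
        (fun n hn => ⟨(hrange n hn).1, (hrange n hn).2.trans (by
          have : 0 ≤ Y / (20 * (A : ℝ) ^ 2) := by positivity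
          linarith)⟩) hspaced
      rw [hset]
      refine hv.trans ?_
      have hYA : Y / (A : ℝ) ^ 2 = 60 * A * r ^ 2 := by
        rw [hr2]
        field_simp
      have hYA' : Y / (A : ℝ) = 60 * A ^ 2 * r ^ 2 := by
        rw [hr2]
        field_simp
      have hsq : 7.5 * A * r ≤ √(Y / A) := by
        apply Real.le_sqrt_of_sq_le
        rw [hYA']
        have : 0 ≤ (A : ℝ) ^ 2 * r ^ 2 := by positivity
        nlinarith
      rw [← hr2]
      have e1 : 2 / r + 2 * (r / r ^ 2 + 1) ≤ 5 / r := by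
        rw [show 2 / r + 2 * (r / r ^ 2 + 1) = (4 + 2 * r) / r by field_simp; ring]
        gcongr
        linarith
      calc (0 - -(Y / (A : ℝ) ^ 2) + 2) * (2 / r + 2 * (r / r ^ 2 + 1))
          ≤ (5 * (Y / (A : ℝ) ^ 2)) * (5 / r) := by
            gcongr
            linarith
        _ = 1500 * A * r := by
            rw [hYA]
            field_simp
            ring
        _ ≤ _ := by linarith
    · have hcard : ‖∑ n ∈ Ioc A B, expTwoPiI (g n)‖ ≤ 2 * A := by
        refine (norm_sum_le _ _).trans ?_
        simp only [norm_expTwoPiI, sum_const, Nat.card_Ioc, nsmul_eq_mul, mul_one]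
        exact_mod_cast (by omega : B - A ≤ 2 * A)
      refine hcard.trans ?_
      have hsq : (A : ℝ) ≤ √(Y / A) := by
        apply Real.le_sqrt_of_sq_le
        rw [lt_div_iff₀ (by positivity)] at hlam
        rw [le_div_iff₀ (by positivity)]
        have : 0 ≤ (A : ℝ) ^ 3 := by positivity
        nlinarith
      linarith

theorem abs_sum_fract_div_sub_half_le_block {z a : ℝ} {A B : ℕ} (hz : 0 < z) (ha : 0 ≤ a)
    (ha1 : a ≤ 1) (hA : 0 < A) (hAB : A ≤ B) (hB : B ≤ 2 * A + 1) :
    |∑ n ∈ Ioc A B, (Int.fract (z ^ 3 / (n + a)) - 1 / 2)| ≤ 1000 * z + 80 * (A ^ 2 / z ^ 3) := by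
  have hA' : (1 : ℝ) ≤ A := by exact_mod_cast hA
  have hcard : ((Ioc A B).card : ℝ) ≤ 2 * A := by
    rw [Nat.card_Ioc]
    exact_mod_cast (by omega : B - A ≤ 2 * A)
  have hQ0 : 0 ≤ (A : ℝ) ^ 2 / z ^ 3 := by positivity
  rcases lt_or_ge (A : ℝ) z with hlt | hge
  · refine (abs_sum_le_sum_abs _ _).trans ?_
    have : ∑ n ∈ Ioc A B, |Int.fract (z ^ 3 / (n + a)) - 1 / 2| ≤ ∑ n ∈ Ioc A B, (1 : ℝ) := by
      refine sum_le_sum fun n _ => ?_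
      rw [abs_le]
      constructor <;> linarith [Int.fract_nonneg (z ^ 3 / (n + a)),
        Int.fract_lt_one (z ^ 3 / (n + a))]
    rw [sum_const, nsmul_eq_mul, mul_one] at this
    linarith
  · have hAz : 1 ≤ A / z := by rwa [one_le_div hz]
    set H := ⌈(A : ℝ) / z⌉₊ with hH
    have hH0 : 0 < H := Nat.ceil_pos.2 (by positivity)
    have hH1 : (A : ℝ) / z ≤ H := Nat.le_ceil _
    have hH2 : (H : ℝ) ≤ 2 * (A / z) := by
      have := Nat.ceil_lt_add_one (by positivity : 0 ≤ (A : ℝ) / z)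
      linarith
    have hH' : (0 : ℝ) < H := by exact_mod_cast hH0
    have := abs_sum_fract_sub_half_le (S := Ioc A B) (f := fun n => z ^ 3 / (n + a)) hH0
      (P := 200 * √(z ^ 3 / A)) (Q := 40 * A ^ 2 / z ^ 3) (by positivity) (by positivity) (by
        intro h hh
        have hh' : (0 : ℝ) < h := by exact_mod_cast hh
        have := norm_sum_expTwoPiI_div_le (Y := h * z ^ 3) (by positivity) ha ha1 hA hB
        simp only [← mul_div_assoc]
        refine this.trans (le_of_eq ?_)
        rw [mul_div_assoc, Real.sqrt_mul hh'.le]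
        field_simp)
    refine this.trans ?_
    have e1 : √(z ^ 3 / A) * √(H : ℝ) ≤ 2 * z := by
      rw [← Real.sqrt_mul (by positivity)]
      apply Real.sqrt_le_iff.2
      refine ⟨by positivity, ?_⟩
      calc z ^ 3 / A * H ≤ z ^ 3 / A * (2 * (A / z)) := by gcongr
        _ = 2 * z ^ 2 := by field_simp
        _ ≤ (2 * z) ^ 2 := by nlinarith [sq_nonneg z]
    have e2 : ((Ioc A B).card : ℝ) / H ≤ 2 * z := by
      rw [div_le_iff₀ hH']
      rw [div_le_iff₀ hz] at hH1
      linarith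
    have e3 : 2 * (40 * (A : ℝ) ^ 2 / z ^ 3) = 80 * (A ^ 2 / z ^ 3) := by ring
    nlinarith

/-- The sawtooth sum over a hyperbola, with a dyadic decomposition of the range. -/
theorem abs_sum_fract_div_sub_half_le {z a : ℝ} (hz : 1 ≤ z) (ha : 0 ≤ a) (ha1 : a ≤ 1) (M : ℕ) :
    |∑ n ∈ Ioc 0 M, (Int.fract (z ^ 3 / (n + a)) - 1 / 2)|
      ≤ 1000 * z * (Nat.log 2 M + 1) + 80 * (M ^ 2 / z ^ 3) := by
  have hz0 : 0 < z := by linarith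
  induction M using Nat.strong_induction_on with
  | _ M ih =>
    rcases lt_or_ge M 2 with hM | hM
    · have hQ0 : 0 ≤ 80 * ((M : ℝ) ^ 2 / z ^ 3) := by positivity
      have h2 : |∑ n ∈ Ioc 0 M, (Int.fract (z ^ 3 / (n + a)) - 1 / 2)| ≤ 1 := by
        interval_cases M
        · simp
        · simp only [show Ioc 0 1 = {1} from rfl, sum_singleton]
          rw [abs_le]
          constructor <;> linarith [Int.fract_nonneg (z ^ 3 / ((1 : ℕ) + a)),
            Int.fract_lt_one (z ^ 3 / ((1 : ℕ) + a))]
      have h3 : (0 : ℝ) ≤ Nat.log 2 M := by positivity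
      nlinarith
    · have h1 := ih (M / 2) (by omega)
      have h2 := abs_sum_fract_div_sub_half_le_block (A := M / 2) (B := M) hz0 ha ha1 (by omega)
        (by omega) (by omega)
      have hlog : Nat.log 2 M = Nat.log 2 (M / 2) + 1 := Nat.log_of_one_lt_of_le (by norm_num) hM
      rw [← sum_Ioc_consecutive _ (Nat.zero_le (M / 2)) (by omega : M / 2 ≤ M)]
      refine (abs_add_le _ _).trans ((add_le_add h1 h2).trans ?_)
      have h3 : ((M / 2 : ℕ) : ℝ) ≤ M / 2 := Nat.cast_div_le
      have h4 : ((M / 2 : ℕ) : ℝ) ^ 2 / z ^ 3 ≤ (M / 2) ^ 2 / z ^ 3 := by gcongr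
      have h5 : ((M : ℝ) / 2) ^ 2 / z ^ 3 = (M ^ 2 / z ^ 3) / 4 := by ring
      have h6 : 0 ≤ (M : ℝ) ^ 2 / z ^ 3 := by positivity
      rw [hlog]
      push_cast
      linarith

theorem sigma_one_div_eq_sum_divisors {m : ℕ} (hm : m ≠ 0) :
    ((ArithmeticFunction.sigma 1) m : ℝ) / m = ∑ d ∈ m.divisors, 1 / (d : ℝ) := by
  rw [ArithmeticFunction.sigma_one_apply, ← Nat.sum_div_divisors, Nat.cast_sum, sum_div]
  refine sum_congr rfl fun d hd => ?_
  have hdm := Nat.dvd_of_mem_divisors hd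
  have hd0 : (d : ℝ) ≠ 0 := by exact_mod_cast (Nat.pos_of_mem_divisors hd).ne'
  have hm0 : (m : ℝ) ≠ 0 := by exact_mod_cast hm
  rw [Nat.cast_div hdm hd0]
  field_simp

theorem sigma_one_div_le (m : ℕ) :
    ((ArithmeticFunction.sigma 1) m : ℝ) / m ≤ 1 + Real.log m := by
  rcases eq_or_ne m 0 with rfl | hm
  · simp
  rw [sigma_one_div_eq_sum_divisors hm]
  refine le_trans ?_ (harmonic_le_one_add_log m)
  rw [harmonic_eq_sum_Icc]
  push_cast
  simp only [one_div]
  refine sum_le_sum_of_subset_of_nonneg (fun d hd => ?_) fun _ _ _ => by positivity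
  exact mem_Icc.2 ⟨Nat.pos_of_mem_divisors hd, Nat.divisor_le hd⟩

theorem sum_Ioc_sum_divisors (K : ℕ) (G : ℕ → ℕ → ℝ) :
    ∑ m ∈ Ioc 0 K, ∑ d ∈ m.divisors, G d m = ∑ d ∈ Ioc 0 K, ∑ k ∈ Ioc 0 (K / d), G d (d * k) := by
  rw [sum_comm' (t' := Ioc 0 K) (s' := fun d => (Ioc 0 (K / d)).image (d * ·))]
  · refine sum_congr rfl fun d hd => ?_
    rw [sum_image]
    intro i _ j _ hij
    exact Nat.eq_of_mul_eq_mul_left (mem_Ioc.1 hd).1 hij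
  · intro m d
    simp only [mem_Ioc, Nat.mem_divisors, mem_image]
    constructor
    · rintro ⟨⟨h1, h2⟩, ⟨k, rfl⟩, h3⟩
      have hd : 0 < d := Nat.pos_of_mul_pos_right h1
      have hk : 0 < k := Nat.pos_of_mul_pos_left h1
      exact ⟨⟨k, ⟨hk, (Nat.le_div_iff_mul_le hd).2 (by rwa [mul_comm])⟩, rfl⟩, hd,
        (Nat.le_mul_of_pos_right d hk).trans h2⟩
    · rintro ⟨⟨k, ⟨hk, hk'⟩, rfl⟩, hd, _⟩
      have := (Nat.le_div_iff_mul_le hd).1 hk'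
      exact ⟨⟨by positivity, by rwa [mul_comm]⟩, ⟨k, rfl⟩, by positivity⟩

theorem sum_floor_div_eq (F : ℕ → ℝ) {x : ℝ} (hx : 0 < x) :
    ∑ n ∈ Icc 1 ⌊x⌋₊, F ⌊x / (n : ℝ)⌋₊
      = ∑ m ∈ Ioc 0 ⌊x⌋₊, F m * ((⌊x / (m : ℝ)⌋₊ : ℝ) - (⌊x / ((m : ℝ) + 1)⌋₊ : ℝ)) := by
  have hmaps : ∀ n ∈ Icc 1 ⌊x⌋₊, ⌊x / (n : ℝ)⌋₊ ∈ Ioc 0 ⌊x⌋₊ := by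
    intro n hn
    rw [mem_Icc] at hn
    have h1 : (1 : ℝ) ≤ n := by exact_mod_cast hn.1
    have h2 : (n : ℝ) ≤ x := (Nat.le_floor_iff hx.le).1 hn.2
    rw [mem_Ioc]
    refine ⟨Nat.floor_pos.2 ?_, Nat.floor_le_floor (div_le_self hx.le h1)⟩
    rw [one_le_div (by linarith)]
    exact h2
  rw [← sum_fiberwise_of_maps_to hmaps]
  refine sum_congr rfl fun m hm => ?_
  have hm0 : (0 : ℝ) < m := by exact_mod_cast (mem_Ioc.1 hm).1
  have hfib : (Icc 1 ⌊x⌋₊).filter (fun n : ℕ => ⌊x / (n : ℝ)⌋₊ = m)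
      = Ioc ⌊x / ((m : ℝ) + 1)⌋₊ ⌊x / (m : ℝ)⌋₊ := by
    ext n
    rw [mem_filter, mem_Icc, mem_Ioc, Nat.le_floor_iff hx.le, Nat.le_floor_iff (by positivity),
      Nat.floor_lt (by positivity), Nat.floor_eq_iff (by positivity)]
    have hm1 : (1 : ℝ) ≤ m := by exact_mod_cast (mem_Ioc.1 hm).1
    constructor
    · rintro ⟨⟨h1, h2⟩, h3, h4⟩
      have hn : (0 : ℝ) < n := by exact_mod_cast h1
      rw [le_div_iff₀ hn] at h3
      rw [div_lt_iff₀ hn] at h4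
      rw [div_lt_iff₀ (by positivity), le_div_iff₀ hm0]
      constructor <;> linarith
    · rintro ⟨h1, h2⟩
      have hn : (0 : ℝ) < n := lt_trans (by positivity) h1
      have hn' : 1 ≤ n := by exact_mod_cast hn
      rw [div_lt_iff₀ (by positivity)] at h1
      rw [le_div_iff₀ hm0] at h2
      rw [le_div_iff₀ hn, div_lt_iff₀ hn]
      refine ⟨⟨hn', ?_⟩, ?_, ?_⟩ <;> nlinarith
  have hle : ⌊x / ((m : ℝ) + 1)⌋₊ ≤ ⌊x / (m : ℝ)⌋₊ := by
    gcongr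
    linarith
  rw [sum_congr rfl (fun n hn => by rw [(mem_filter.1 hn).2] : ∀ n ∈ (Icc 1 ⌊x⌋₊).filter
    (fun n : ℕ => ⌊x / (n : ℝ)⌋₊ = m), F ⌊x / (n : ℝ)⌋₊ = F m), hfib, sum_const, Nat.card_Ioc,
    nsmul_eq_mul, Nat.cast_sub hle, mul_comm]

theorem sigma_one_div_sq_mul_le {m : ℕ} (hm : 0 < m) :
    ((ArithmeticFunction.sigma 1) m : ℝ) / (m ^ 2 * (m + 1))
      ≤ (2 + Real.log m) / m - (2 + Real.log (m + 1)) / (m + 1) := by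
  have hm0 : (0 : ℝ) < m := by exact_mod_cast hm
  have h1 := sigma_one_div_le m
  have h2 : Real.log (m + 1) - Real.log m ≤ 1 / m := by
    rw [← Real.log_div (by positivity) (by positivity)]
    refine (Real.log_le_sub_one_of_pos (by positivity)).trans (le_of_eq ?_)
    field_simp
    ring
  rw [le_div_iff₀ hm0] at h2
  calc ((ArithmeticFunction.sigma 1) m : ℝ) / (m ^ 2 * (m + 1))
      = ((ArithmeticFunction.sigma 1) m : ℝ) / m / (m * (m + 1)) := by field_simp
    _ ≤ (1 + Real.log m) / (m * (m + 1)) := by gcongr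
    _ ≤ ((2 + Real.log m) * (m + 1) - m * (2 + Real.log (m + 1))) / (m * (m + 1)) := by
      gcongr
      nlinarith
    _ = _ := by rw [div_sub_div _ _ (by positivity) (by positivity)]

theorem sum_range_sigma_one_div_le {K : ℕ} (hK : 0 < K) (R : ℕ) :
    ∑ i ∈ range R, ((ArithmeticFunction.sigma 1) (i + K) : ℝ) /
        (((i + K : ℕ) : ℝ) ^ 2 * ((i + K : ℕ) + 1))
      ≤ (2 + Real.log K) / K := by
  suffices h : ∑ i ∈ range R, ((ArithmeticFunction.sigma 1) (i + K) : ℝ) /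
        (((i + K : ℕ) : ℝ) ^ 2 * ((i + K : ℕ) + 1))
      ≤ (2 + Real.log K) / K - (2 + Real.log (R + K : ℕ)) / (R + K : ℕ) by
    have : 0 ≤ (2 + Real.log (R + K : ℕ)) / (R + K : ℕ) := by
      have := Real.log_natCast_nonneg (R + K)
      positivity
    linarith
  induction R with
  | zero => simp
  | succ R ih =>
    rw [sum_range_succ]
    have := sigma_one_div_sq_mul_le (m := R + K) (by omega)
    rw [show ((R + 1 + K : ℕ) : ℝ) = ((R + K : ℕ) : ℝ) + 1 by push_cast; ring]
    linarith

theorem summable_sigma_one_div :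
    Summable fun m : ℕ => ((ArithmeticFunction.sigma 1) m : ℝ) / (m ^ 2 * (m + 1)) := by
  rw [← summable_nat_add_iff 1]
  exact summable_of_sum_range_le (fun _ => by positivity) (sum_range_sigma_one_div_le one_pos)

theorem abs_sum_Ioc_sub_tsum_sigma_one_div_le (K : ℕ) :
    |∑ m ∈ Ioc 0 K, ((ArithmeticFunction.sigma 1) m : ℝ) / (m ^ 2 * (m + 1))
      - ∑' m : ℕ, ((ArithmeticFunction.sigma 1) m : ℝ) / (m ^ 2 * (m + 1))|
      ≤ (2 + Real.log ((K : ℝ) + 1)) / (K + 1) := by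
  have h := summable_sigma_one_div.sum_add_tsum_nat_add (K + 1)
  have h1 : ∑ m ∈ Ioc 0 K, ((ArithmeticFunction.sigma 1) m : ℝ) / (m ^ 2 * (m + 1))
      = ∑ m ∈ range (K + 1), ((ArithmeticFunction.sigma 1) m : ℝ) / (m ^ 2 * (m + 1)) := by
    refine sum_subset (fun m hm => ?_) fun m hm hm' => ?_
    · simp only [mem_Ioc, mem_range] at hm ⊢
      omega
    · have : m = 0 := by
        simp only [mem_Ioc, mem_range] at hm hm'
        omega
      simp [this]
  rw [h1, ← h, sub_add_cancel_left, abs_neg, abs_of_nonneg (tsum_nonneg fun _ => by positivity)]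
  have := Real.tsum_le_of_sum_range_le (fun _ => by positivity)
    (sum_range_sigma_one_div_le (K := K + 1) (by omega))
  push_cast at this ⊢
  exact this

theorem abs_sum_sigma_one_div_mul_fract_le {Z : ℝ} (hZ : 1 ≤ Real.log Z) (hZ1 : 1 ≤ Z) {b : ℝ}
    (hb : 0 ≤ b) (hb1 : b ≤ 1) :
    |∑ m ∈ Ioc 0 ⌊Z ^ 2⌋₊, ((ArithmeticFunction.sigma 1) m : ℝ) / m *
        (Int.fract (Z ^ 3 / (m + b)) - 1 / 2)|
      ≤ (4000 * ∑' d : ℕ, 1 / (d : ℝ) ^ (4 / 3 : ℝ) + 240) * (Z * Real.log Z) := by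
  have hZ0 : 0 < Z := by linarith
  set K := ⌊Z ^ 2⌋₊ with hK
  have hKZ : (K : ℝ) ≤ Z ^ 2 := Nat.floor_le (by positivity)
  have hK1 : 1 ≤ K := Nat.one_le_floor_iff _ |>.2 (by nlinarith)
  have hlog : (Nat.log 2 K : ℝ) + 1 ≤ 4 * Real.log Z := by
    have h1 := Real.natLog_le_logb K 2
    have h2 : Real.log K ≤ 2 * Real.log Z := by
      rw [← Real.log_rpow hZ0]
      exact Real.log_le_log (by exact_mod_cast hK1) (by exact_mod_cast hKZ)
    rw [Real.logb] at h1
    have h3 := Real.log_two_gt_d9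
    have h4 : Real.log K / Real.log (2 : ℕ) ≤ 3 * Real.log Z := by
      rw [div_le_iff₀ (by push_cast; linarith)]
      push_cast
      nlinarith
    linarith
  have hconv : ∑ m ∈ Ioc 0 K, ((ArithmeticFunction.sigma 1) m : ℝ) / m *
        (Int.fract (Z ^ 3 / (m + b)) - 1 / 2)
      = ∑ d ∈ Ioc 0 K, 1 / (d : ℝ) * ∑ k ∈ Ioc 0 (K / d),
          (Int.fract (Z ^ 3 / ((d * k : ℕ) + b)) - 1 / 2) := by
    simp only [mul_sum]
    rw [← sum_Ioc_sum_divisors K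
      (fun d m => 1 / (d : ℝ) * (Int.fract (Z ^ 3 / ((m : ℝ) + b)) - 1 / 2))]
    refine sum_congr rfl fun m hm => ?_
    rw [sigma_one_div_eq_sum_divisors (mem_Ioc.1 hm).1.ne', sum_mul]
  rw [hconv]
  have hterm : ∀ d ∈ Ioc 0 K, |1 / (d : ℝ) * ∑ k ∈ Ioc 0 (K / d),
          (Int.fract (Z ^ 3 / ((d * k : ℕ) + b)) - 1 / 2)|
      ≤ 4000 * (Z * Real.log Z) * (1 / (d : ℝ) ^ (4 / 3 : ℝ)) + 80 * Z * (1 / (d : ℝ) ^ 2) := by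
    intro d hd
    rw [mem_Ioc] at hd
    have hd0 : (0 : ℝ) < d := by exact_mod_cast hd.1
    have hd1 : (1 : ℝ) ≤ d := by exact_mod_cast hd.1
    have hdK : (d : ℝ) ≤ K := by exact_mod_cast hd.2
    set c : ℝ := (d : ℝ) ^ (-(1 / 3) : ℝ) with hc
    have hc0 : 0 < c := Real.rpow_pos_of_pos hd0 _
    have hc3 : c ^ 3 = 1 / d := by
      rw [hc, ← Real.rpow_natCast, ← Real.rpow_mul hd0.le]
      norm_num
      rw [Real.rpow_neg_one]
    have hc4 : 1 / (d : ℝ) * c = 1 / (d : ℝ) ^ (4 / 3 : ℝ) := by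
      rw [one_div, one_div, ← Real.rpow_neg_one, hc, ← Real.rpow_add hd0, ← Real.rpow_neg hd0.le]
      norm_num
    have hz3 : (Z * c) ^ 3 = Z ^ 3 / d := by
      rw [mul_pow, hc3]
      ring
    have hz1 : 1 ≤ Z * c := by
      by_contra! hlt
      have h1 : (Z * c) ^ 3 < 1 := pow_lt_one₀ (by positivity) hlt (by norm_num)
      rw [hz3, div_lt_one hd0] at h1
      nlinarith [sq_nonneg Z]
    have hmain := abs_sum_fract_div_sub_half_le (a := b / d) hz1 (by positivity)
      (by rw [div_le_one hd0]; linarith) (K / d)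
    have hsum : ∑ k ∈ Ioc 0 (K / d), (Int.fract (Z ^ 3 / ((d * k : ℕ) + b)) - 1 / 2)
        = ∑ k ∈ Ioc 0 (K / d), (Int.fract ((Z * c) ^ 3 / (k + b / d)) - 1 / 2) := by
      refine sum_congr rfl fun k _ => ?_
      rw [hz3, div_div, mul_add, mul_div_cancel₀ _ hd0.ne']
      push_cast
      rfl
    rw [hsum, abs_mul, abs_of_pos (by positivity)]
    have hl : (Nat.log 2 (K / d) : ℝ) + 1 ≤ 4 * Real.log Z := by
      have : Nat.log 2 (K / d) ≤ Nat.log 2 K := Nat.log_mono_right (Nat.div_le_self K d)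
      have : (Nat.log 2 (K / d) : ℝ) ≤ Nat.log 2 K := by exact_mod_cast this
      linarith
    have hq : ((K / d : ℕ) : ℝ) ^ 2 / (Z * c) ^ 3 ≤ Z / d := by
      have h1 : ((K / d : ℕ) : ℝ) ≤ Z ^ 2 / d := Nat.cast_div_le.trans (by gcongr)
      calc ((K / d : ℕ) : ℝ) ^ 2 / (Z * c) ^ 3 ≤ (Z ^ 2 / d) ^ 2 / (Z * c) ^ 3 := by gcongr
        _ = Z / d := by
          rw [hz3]
          field_simp
    calc 1 / (d : ℝ) * |∑ k ∈ Ioc 0 (K / d), (Int.fract ((Z * c) ^ 3 / (k + b / d)) - 1 / 2)|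
        ≤ 1 / (d : ℝ) * (1000 * (Z * c) * (4 * Real.log Z) + 80 * (Z / d)) := by
          gcongr
          refine hmain.trans ?_
          gcongr
      _ = 4000 * (Z * Real.log Z) * (1 / (d : ℝ) * c) + 80 * Z * (1 / (d : ℝ) ^ 2) := by
          field_simp
          ring
      _ = _ := by rw [hc4]
  refine (abs_sum_le_sum_abs _ _).trans ((sum_le_sum hterm).trans ?_)
  rw [sum_add_distrib, ← mul_sum, ← mul_sum]
  have hs1 : ∑ d ∈ Ioc 0 K, 1 / (d : ℝ) ^ (4 / 3 : ℝ) ≤ ∑' d : ℕ, 1 / (d : ℝ) ^ (4 / 3 : ℝ) :=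
    (Real.summable_one_div_nat_rpow.2 (by norm_num)).sum_le_tsum _ fun _ _ => by positivity
  have hs2 : ∑ d ∈ Ioc 0 K, 1 / (d : ℝ) ^ 2 ≤ 3 := sum_Icc_one_div_sq_le K
  have hZl : Z ≤ Z * Real.log Z := le_mul_of_one_le_right hZ0.le hZ
  calc _ ≤ 4000 * (Z * Real.log Z) * ∑' d : ℕ, 1 / (d : ℝ) ^ (4 / 3 : ℝ) + 80 * Z * 3 := by
        gcongr
    _ ≤ _ := by nlinarith

theorem natCast_floor_eq_sub_fract {y : ℝ} (hy : 0 ≤ y) :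
    (⌊y⌋₊ : ℝ) = y - 1 / 2 - (Int.fract y - 1 / 2) := by
  rw [natCast_floor_eq_intCast_floor hy, Int.fract]
  ring

theorem abs_sum_sigma_floor_sub_le {Z : ℝ} (hZ : 1 ≤ Real.log Z) (hZ1 : 1 ≤ Z) :
    |(∑ n ∈ Icc 1 ⌊Z ^ 3⌋₊, ((ArithmeticFunction.sigma 1) ⌊Z ^ 3 / (n : ℝ)⌋₊ : ℝ) /
          (⌊Z ^ 3 / (n : ℝ)⌋₊ : ℝ)) -
        Z ^ 3 * ∑' m : ℕ, ((ArithmeticFunction.sigma 1) m : ℝ) / (m ^ 2 * (m + 1))|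
      ≤ (2 * (4000 * ∑' d : ℕ, 1 / (d : ℝ) ^ (4 / 3 : ℝ) + 240) + 10) * (Z * Real.log Z) := by
  have hZ0 : 0 < Z := by linarith
  set F : ℕ → ℝ := fun m => ((ArithmeticFunction.sigma 1) m : ℝ) / m with hF
  have hF0 : ∀ m, 0 ≤ F m := fun m => by positivity
  set K := ⌊Z ^ 2⌋₊ with hK
  set N := ⌊Z ^ 3⌋₊ with hN
  have hKZ : (K : ℝ) ≤ Z ^ 2 := Nat.floor_le (by positivity)
  have hKZ' : Z ^ 2 < K + 1 := Nat.lt_floor_add_one _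
  have hZl : Z ≤ Z * Real.log Z := le_mul_of_one_le_right hZ0.le hZ
  have hKN : K ≤ N := Nat.floor_le_floor (pow_le_pow_right₀ hZ1 (by norm_num))
  rw [sum_floor_div_eq F (by positivity : 0 < Z ^ 3), ← sum_Ioc_consecutive _ (Nat.zero_le K) hKN]
  have hlarge : |∑ m ∈ Ioc K N, F m *
      ((⌊Z ^ 3 / (m : ℝ)⌋₊ : ℝ) - (⌊Z ^ 3 / ((m : ℝ) + 1)⌋₊ : ℝ))| ≤ 4 * (Z * Real.log Z) := by
    have hdiff : ∀ m ∈ Ioc K N,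
        0 ≤ (⌊Z ^ 3 / (m : ℝ)⌋₊ : ℝ) - (⌊Z ^ 3 / ((m : ℝ) + 1)⌋₊ : ℝ) := by
      intro m hm
      have hm0 : (0 : ℝ) < m := by exact_mod_cast (by rw [mem_Ioc] at hm; omega : 0 < m)
      rw [sub_nonneg, Nat.cast_le]
      gcongr
      linarith
    rw [abs_of_nonneg (sum_nonneg fun m hm => mul_nonneg (hF0 m) (hdiff m hm))]
    have htel : ∑ m ∈ Ioc K N, ((⌊Z ^ 3 / (m : ℝ)⌋₊ : ℝ) - (⌊Z ^ 3 / ((m : ℝ) + 1)⌋₊ : ℝ))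
        = (⌊Z ^ 3 / ((K : ℝ) + 1)⌋₊ : ℝ) - (⌊Z ^ 3 / ((N : ℝ) + 1)⌋₊ : ℝ) := by
      clear_value N
      clear hN hdiff
      induction N, hKN using Nat.le_induction with
      | base => simp
      | succ n hn ih =>
        rw [sum_Ioc_succ_top (by omega), ih]
        push_cast
        ring
    have hfl : (⌊Z ^ 3 / ((K : ℝ) + 1)⌋₊ : ℝ) ≤ Z := by
      refine (Nat.floor_le (by positivity)).trans ?_
      rw [div_le_iff₀ (by positivity)]
      nlinarith
    calc _ ≤ ∑ m ∈ Ioc K N, 4 * Real.log Z *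
          ((⌊Z ^ 3 / (m : ℝ)⌋₊ : ℝ) - (⌊Z ^ 3 / ((m : ℝ) + 1)⌋₊ : ℝ)) := by
          refine sum_le_sum fun m hm => mul_le_mul_of_nonneg_right ?_ (hdiff m hm)
          refine (sigma_one_div_le m).trans ?_
          rw [mem_Ioc] at hm
          have hm0 : (0 : ℝ) < m := by exact_mod_cast (by omega : 0 < m)
          have h1 : (m : ℝ) ≤ Z ^ 3 := (Nat.le_floor_iff (by positivity)).1 hm.2
          have h2 := Real.log_le_log hm0 h1
          rw [Real.log_pow] at h2
          push_cast at h2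
          linarith
      _ = 4 * Real.log Z * ((⌊Z ^ 3 / ((K : ℝ) + 1)⌋₊ : ℝ) - (⌊Z ^ 3 / ((N : ℝ) + 1)⌋₊ : ℝ)) := by
          rw [← mul_sum, htel]
      _ ≤ 4 * Real.log Z * Z := by
          gcongr
          have : (0 : ℝ) ≤ (⌊Z ^ 3 / ((N : ℝ) + 1)⌋₊ : ℝ) := by positivity
          linarith
      _ = _ := by ring
  have hsmall : ∑ m ∈ Ioc 0 K, F m *
      ((⌊Z ^ 3 / (m : ℝ)⌋₊ : ℝ) - (⌊Z ^ 3 / ((m : ℝ) + 1)⌋₊ : ℝ))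
      = Z ^ 3 * ∑ m ∈ Ioc 0 K, ((ArithmeticFunction.sigma 1) m : ℝ) / (m ^ 2 * (m + 1))
        - ∑ m ∈ Ioc 0 K, F m * (Int.fract (Z ^ 3 / (m + 0)) - 1 / 2)
        + ∑ m ∈ Ioc 0 K, F m * (Int.fract (Z ^ 3 / (m + 1)) - 1 / 2) := by
    rw [mul_sum, ← sum_sub_distrib, ← sum_add_distrib]
    refine sum_congr rfl fun m hm => ?_
    have hm0 : (0 : ℝ) < m := by exact_mod_cast (mem_Ioc.1 hm).1
    rw [natCast_floor_eq_sub_fract (by positivity : 0 ≤ Z ^ 3 / (m : ℝ)),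
      natCast_floor_eq_sub_fract (by positivity : 0 ≤ Z ^ 3 / ((m : ℝ) + 1)), add_zero]
    have e : Z ^ 3 * (((ArithmeticFunction.sigma 1) m : ℝ) / (m ^ 2 * (m + 1)))
        = F m * (Z ^ 3 / m - Z ^ 3 / (m + 1)) := by
      simp only [hF]
      field_simp
      ring
    rw [e]
    ring
  have htail : |Z ^ 3 * ∑ m ∈ Ioc 0 K, ((ArithmeticFunction.sigma 1) m : ℝ) / (m ^ 2 * (m + 1))
      - Z ^ 3 * ∑' m : ℕ, ((ArithmeticFunction.sigma 1) m : ℝ) / (m ^ 2 * (m + 1))|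
      ≤ 6 * (Z * Real.log Z) := by
    rw [← mul_sub, abs_mul, abs_of_pos (by positivity)]
    have h1 : Real.log ((K : ℝ) + 1) ≤ 4 * Real.log Z := by
      have : Real.log ((K : ℝ) + 1) ≤ Real.log (Z ^ 4) := by
        apply Real.log_le_log (by positivity)
        have hZe : 2 ≤ Z := by linarith [Real.log_le_sub_one_of_pos hZ0]
        nlinarith [sq_nonneg (Z ^ 2 - 2)]
      rwa [Real.log_pow, Nat.cast_ofNat] at this
    calc _ ≤ Z ^ 3 * ((2 + Real.log ((K : ℝ) + 1)) / (K + 1)) := by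
          gcongr
          exact abs_sum_Ioc_sub_tsum_sigma_one_div_le K
      _ ≤ Z ^ 3 * (6 * Real.log Z / Z ^ 2) := by
          gcongr
          linarith
      _ = _ := by field_simp
  have hf0 := abs_le.1 (abs_sum_sigma_one_div_mul_fract_le hZ hZ1 le_rfl zero_le_one)
  have hf1 := abs_le.1 (abs_sum_sigma_one_div_mul_fract_le hZ hZ1 zero_le_one le_rfl)
  have ht := abs_le.1 htail
  have hl := abs_le.1 hlarge
  rw [hsmall, abs_le]
  constructor <;> linarith [hf0.1, hf0.2, hf1.1, hf1.2, ht.1, ht.2, hl.1, hl.2]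

/-- `∑_{n ≤ x} σ(⌊x/n⌋)/⌊x/n⌋ = x ∑_{m ≥ 1} σ(m)/(m²(m+1)) + O(x^{1/3} log x)`,
where `σ(n) = ∑_{d ∣ n} d` is the sum-of-divisors function. -/
theorem sum_sigma_ratio_floor_div :
    (fun x : ℝ =>
        (∑ n ∈ Finset.Icc 1 ⌊x⌋₊,
          ((ArithmeticFunction.sigma 1) ⌊x / (n : ℝ)⌋₊ : ℝ) / (⌊x / (n : ℝ)⌋₊ : ℝ)) -
        x * ∑' m : ℕ, ((ArithmeticFunction.sigma 1) m : ℝ) / (m ^ 2 * (m + 1)))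
    =O[atTop] fun x : ℝ => x ^ ((1 : ℝ) / 3) * Real.log x := by
  refine Asymptotics.IsBigO.of_bound
    (2 * (4000 * ∑' d : ℕ, 1 / (d : ℝ) ^ (4 / 3 : ℝ) + 240) + 10) ?_
  filter_upwards [eventually_ge_atTop (Real.exp 3)] with x hx
  have hx0 : 0 < x := (Real.exp_pos 3).trans_le hx
  have hlog3 : 3 ≤ Real.log x := (Real.le_log_iff_exp_le hx0).2 hx
  have hx1 : 1 ≤ x := (Real.one_le_exp (by norm_num)).trans hx
  have hlogZ : Real.log (x ^ ((1 : ℝ) / 3)) = 1 / 3 * Real.log x := Real.log_rpow hx0 _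
  have hZ3 : (x ^ ((1 : ℝ) / 3)) ^ 3 = x := by
    rw [← Real.rpow_natCast, ← Real.rpow_mul hx0.le]
    norm_num
  have hZ1 : 1 ≤ x ^ ((1 : ℝ) / 3) := Real.one_le_rpow hx1 (by norm_num)
  have key := abs_sum_sigma_floor_sub_le (Z := x ^ ((1 : ℝ) / 3)) (by rw [hlogZ]; linarith) hZ1
  rw [hZ3] at key
  rw [Real.norm_eq_abs, Real.norm_eq_abs,
    abs_of_nonneg (a := x ^ ((1 : ℝ) / 3) * Real.log x) (by positivity)]
  rw [hlogZ] at key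
  refine key.trans ?_
  gcongr
  linarith
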